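/- arXiv:1911.02229 — 2 statements merged into one kernel-verified Lean document; each statement's English description precedes it below -/
import Mathlib

section
/- Let G be a group, let g ≥ 1 be an integer, let γ₁, …, γ_{2g} and δ₁, …, δ_{2g} be elements of G, and let B₁, …, B_{2g} be automorphisms of G such that (a) B_i(δ_i) = γ_i for all 1 ≤ i ≤ 2g, (b) B_i(γ_i) = δ_{i+1} for all 1 ≤ i ≤ 2g−1, (c) B_{2g}(γ_{2g}) = δ₁⁻¹, and (d) B_j(γ_i) = γ_i whenever i ≠ j. Let W be the composite automorphism B₁ ∘ B_{2g} ∘ B_{2g−1} ∘ ⋯ ∘ B₂ ∘ B₁, where the rightmost B₁ is applied first, then B₂, B₃, …, B_{2g}, and finally B₁. Then W(γ_i) = γ_{i+1} for every 1 ≤ i ≤ 2g−1, and W(γ_{2g}) = γ₁⁻¹. -/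
theorem prod_step {G : Type*} [Group G] (B : ℕ → G ≃* G) (n : ℕ) (x : G) :
    (((List.range (n + 1)).map (fun k => B (n + 1 - k))).prod : G ≃* G) x
      = B (n + 1) ((((List.range n).map (fun k => B (n - k))).prod : G ≃* G) x) := by
  rw [List.range_succ_eq_map, List.map_cons, List.prod_cons, List.map_map, MulAut.mul_apply]
  have h : ((fun k => B (n + 1 - k)) ∘ Nat.succ) = fun k => B (n - k) := by
    funext k
    simp
  rw [h]
  rfl

/-- The algebraic core of Proposition 3.2: if automorphisms `B 1, …, B (2g)` of a group `G`
act on elements `γ i`, `δ i` by `B i (δ i) = γ i`, `B i (γ i) = δ (i+1)` for `i ≤ 2g - 1`,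
`B (2g) (γ (2g)) = (δ 1)⁻¹`, and `B j (γ i) = γ i` for `i ≠ j`, then the composite
`W = B 1 ∘ B (2g) ∘ B (2g-1) ∘ ⋯ ∘ B 2 ∘ B 1` (rightmost applied first) satisfies
`W (γ i) = γ (i+1)` for `1 ≤ i ≤ 2g - 1` and `W (γ (2g)) = (γ 1)⁻¹`. -/
theorem stmt1 (G : Type*) [Group G] (g : ℕ) (hg : 1 ≤ g)
    (γ δ : ℕ → G) (B : ℕ → G ≃* G)
    (ha : ∀ i, 1 ≤ i → i ≤ 2 * g → B i (δ i) = γ i)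
    (hb : ∀ i, 1 ≤ i → i ≤ 2 * g - 1 → B i (γ i) = δ (i + 1))
    (hc : B (2 * g) (γ (2 * g)) = (δ 1)⁻¹)
    (hd : ∀ i j, 1 ≤ i → i ≤ 2 * g → 1 ≤ j → j ≤ 2 * g → i ≠ j → B j (γ i) = γ i) :
    (∀ i, 1 ≤ i → i ≤ 2 * g - 1 →
      ((B 1 :: (List.range (2 * g)).map (fun k => B (2 * g - k))).prod : G ≃* G) (γ i)
        = γ (i + 1)) ∧
    ((B 1 :: (List.range (2 * g)).map (fun k => B (2 * g - k))).prod : G ≃* G) (γ (2 * g))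
      = (γ 1)⁻¹ := by
  have fix : ∀ i, 1 ≤ i → i ≤ 2 * g → ∀ n, n < i →
      (((List.range n).map (fun k => B (n - k))).prod : G ≃* G) (γ i) = γ i := by
    intro i hi hi' n
    induction n with
    | zero => intro _; rfl
    | succ n ih =>
      intro hn
      rw [prod_step, ih (by omega)]
      exact hd i (n + 1) hi hi' (by omega) (by omega) (by omega)
  have after : ∀ i, 1 ≤ i → i ≤ 2 * g - 1 → ∀ m, i + 1 + m ≤ 2 * g →
      (((List.range (i + 1 + m)).map (fun k => B (i + 1 + m - k))).prod : G ≃* G) (γ i)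
        = γ (i + 1) := by
    intro i hi hi' m
    induction m with
    | zero =>
      intro _
      obtain ⟨j, rfl⟩ : ∃ j, i = j + 1 := ⟨i - 1, by omega⟩
      rw [Nat.add_zero, prod_step, prod_step, fix (j + 1) hi (by omega) j (by omega),
        hb (j + 1) hi hi']
      exact ha _ (by omega) (by omega)
    | succ m ih =>
      intro hm
      rw [← Nat.add_assoc, prod_step, ih (by omega)]
      exact hd _ _ (by omega) (by omega) (by omega) (by omega) (by omega)
  rw [List.prod_cons]
  refine ⟨fun i hi hi' => ?_, ?_⟩
  · have h := after i hi hi' (2 * g - (i + 1)) (by omega)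
    rw [show i + 1 + (2 * g - (i + 1)) = 2 * g by omega] at h
    rw [MulAut.mul_apply, h]
    exact hd _ _ (by omega) (by omega) (by omega) (by omega) (by omega)
  · have h := prod_step B (2 * g - 1) (γ (2 * g))
    rw [fix (2 * g) (by omega) le_rfl (2 * g - 1) (by omega),
      show 2 * g - 1 + 1 = 2 * g by omega, hc] at h
    rw [MulAut.mul_apply, h, map_inv, ha 1 le_rfl (by omega)]
end

section
/- Let G be a group, let g ≥ 1 be an integer, let ε₁, …, ε_{2g+2} be elements of G, and let D₁, …, D_{2g+1} be automorphisms of G such that (a) D_i(ε_{i+1}) = ε_{i+1}·ε_i⁻¹ for all 1 ≤ i ≤ 2g+1, (b) D_{i+1}(ε_i) = ε_{i+1}·ε_i for all 1 ≤ i ≤ 2g, and (c) D_j(ε_i) = ε_i for all indices 1 ≤ i ≤ 2g+2 and 1 ≤ j ≤ 2g+1 with |i − j| ≠ 1. Then the composite automorphism D₁ ∘ D₂ ∘ ⋯ ∘ D_{2g+1} (where D_{2g+1} is applied first) satisfies (D₁ ∘ D₂ ∘ ⋯ ∘ D_{2g+1})(ε_i) = ε_{i+1} for every 1 ≤ i ≤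 2g. -/
/-- The algebraic core of Proposition 3.3: if automorphisms `D 1, …, D (2g+1)` of a group `G`
act on elements `ε 1, …, ε (2g+2)` by `D i (ε (i+1)) = ε (i+1) * (ε i)⁻¹`,
`D (i+1) (ε i) = ε (i+1) * ε i`, and `D j (ε i) = ε i` whenever `|i - j| ≠ 1`, then the
composite `D 1 ∘ D 2 ∘ ⋯ ∘ D (2g+1)` (with `D (2g+1)` applied first) sends `ε i` to
`ε (i+1)` for every `1 ≤ i ≤ 2g`. -/
theorem stmt2 (G : Type*) [Group G] (g : ℕ) (hg : 1 ≤ g)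
    (ε : ℕ → G) (D : ℕ → G ≃* G)
    (ha : ∀ i, 1 ≤ i → i ≤ 2 * g + 1 → D i (ε (i + 1)) = ε (i + 1) * (ε i)⁻¹)
    (hb : ∀ i, 1 ≤ i → i ≤ 2 * g → D (i + 1) (ε i) = ε (i + 1) * ε i)
    (hc : ∀ i j, 1 ≤ i → i ≤ 2 * g + 2 → 1 ≤ j → j ≤ 2 * g + 1 →
      |(i : ℤ) - (j : ℤ)| ≠ 1 → D j (ε i) = ε i) :
    ∀ i, 1 ≤ i → i ≤ 2 * g →
      (((List.range (2 * g + 1)).map (fun k => D (k + 1))).prod : G ≃* G) (ε i)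
        = ε (i + 1) := by
  intro i hi hig
  have step : ∀ (n : ℕ) (x : G),
      (((List.range (n + 1)).map (fun k => D (k + 1))).prod : G ≃* G) x
        = (((List.range n).map (fun k => D (k + 1))).prod : G ≃* G) (D (n + 1) x) := by
    intro n x
    rw [List.range_succ, List.map_append, List.prod_append]
    simp [MulAut.mul_apply]
  have low : ∀ n, n + 1 ≤ i →
      (((List.range n).map (fun k => D (k + 1))).prod : G ≃* G) (ε (i + 1)) = ε (i + 1) := by
    intro n
    induction n with
    | zero => intro _; simp
    | succ n ih =>
      intro h
      rw [step, hc (i + 1) (n + 1) (by omega) (by omega) (by omega) (by omega)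
        (by rw [Ne, abs_eq (by norm_num)]; push_cast; omega)]
      exact ih (by omega)
  have high : ∀ n, i + 1 ≤ n → n ≤ 2 * g + 1 →
      (((List.range n).map (fun k => D (k + 1))).prod : G ≃* G) (ε i) = ε (i + 1) := by
    intro n hn
    induction n, hn using Nat.le_induction with
    | base =>
      intro _
      obtain ⟨m, rfl⟩ : ∃ m, i = m + 1 := ⟨i - 1, by omega⟩
      rw [step, hb (m + 1) hi hig, step, map_mul, ha (m + 1) hi (by omega),
        hc (m + 1) (m + 1) (by omega) (by omega) (by omega) (by omega) (by simp),
        inv_mul_cancel_right]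
      exact low m le_rfl
    | succ n hn ih =>
      intro h
      rw [step, hc i (n + 1) (by omega) (by omega) (by omega) (by omega)
        (by rw [Ne, abs_eq (by norm_num)]; push_cast; omega)]
      exact ih (by omega)
  exact high (2 * g + 1) (by omega) le_rfl
end
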